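/- Let k ≥ 1 and m ≥ 1, let r, t be fixed segmented embeddings, and fix a segment index y < k and a coordinate i < m. The partial derivative of the SEEK score f₄(h, r, t) with respect to the coordinate (h_y)_i of the head embedding equals ∑_{0 ≤ x < k} s_{x,y} · (r_x)_i · (t_{w_{x,y}})_i. Equivalently, the segment gradient is ∂f₄/∂h_y = ∑_{0 ≤ x < k} s_{x,y} · (r_x ⊙ t_{w_{x,y}}), where ⊙ is the entry-wise product. -/

import Mathlib

open Finset

/-- Multi-linear dot product of three vectors in ℝ^m. -/
def mdot {m : ℕ} (a b c : Fin m → ℝ) : ℝ := ∑ i : Fin m, a i * b i * c i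

/-- Sign s_{x,y}: -1 if x is odd and x + y ≥ k, else 1. -/
def sSign {k : ℕ} (x y : Fin k) : ℝ :=
  if x.val % 2 = 1 ∧ k ≤ x.val + y.val then -1 else 1

/-- Tail index w_{x,y}: y if x even, (x+y) mod k if x odd. -/
def wIdx {k : ℕ} (x y : Fin k) : Fin k :=
  if x.val % 2 = 0 then y else ⟨(x.val + y.val) % k, Nat.mod_lt _ x.pos⟩

/-- SEEK scoring function f₄. -/
def f4 {k m : ℕ} (h r t : Fin k → Fin m → ℝ) : ℝ :=
  ∑ x : Fin k, ∑ y : Fin k, sSign x y * mdot (r x) (h y) (t (wIdx x y))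

/-- All-segments scoring function f₂. -/
def f2 {k m : ℕ} (h r t : Fin k → Fin m → ℝ) : ℝ :=
  ∑ x : Fin k, ∑ y : Fin k, ∑ w : Fin k, mdot (r x) (h y) (t w)

/-- Signed scoring function f₃. -/
def f3 {k m : ℕ} (h r t : Fin k → Fin m → ℝ) : ℝ :=
  ∑ x : Fin k, ∑ y : Fin k, ∑ w : Fin k, sSign x y * mdot (r x) (h y) (t w)

/-- The derivative of the multi-linear dot product in one coordinate of its second argument. -/
theorem hasDerivAt_mdot_update {m : ℕ} (a b d : Fin m → ℝ) (i : Fin m) (c₀ : ℝ) :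
    HasDerivAt (fun c : ℝ => mdot a (Function.update b i c) d) (a i * d i) c₀ := by
  have hterm : ∀ j ∈ (Finset.univ : Finset (Fin m)),
      HasDerivAt (fun c : ℝ => a j * Function.update b i c j * d j)
        (if j = i then a j * d j else 0) c₀ := by
    intro j _
    by_cases hj : j = i
    · subst hj
      simpa using ((hasDerivAt_id c₀).const_mul (a j)).mul_const (d j)
    · simpa [hj] using hasDerivAt_const c₀ (a j * b j * d j)
  simpa [mdot] using HasDerivAt.fun_sum hterm

/-- Partial derivative of f₄ with respect to the coordinate (h_y)_i of the
head embedding: ∂f₄/∂(h_y)_i = ∑_x s_{x,y} · (r_x)_i · (t_{w_{x,y}})_i. -/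
theorem f4_deriv_head (k m : ℕ) (hk : 1 ≤ k) (hm : 1 ≤ m)
    (h r t : Fin k → Fin m → ℝ) (y : Fin k) (i : Fin m) :
    HasDerivAt
      (fun c : ℝ => f4 (Function.update h y (Function.update (h y) i c)) r t)
      (∑ x : Fin k, sSign x y * (r x i * t (wIdx x y) i)) (h y i) := by
  unfold f4
  refine HasDerivAt.fun_sum fun x _ => ?_
  have hterm : ∀ z ∈ (Finset.univ : Finset (Fin k)),
      HasDerivAt
        (fun c : ℝ => sSign x z *
          mdot (r x) (Function.update h y (Function.update (h y) i c) z) (t (wIdx x z)))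
        (if z = y then sSign x z * (r x i * t (wIdx x z) i) else 0) (h y i) := by
    intro z _
    by_cases hz : z = y
    · subst hz
      simpa using
        (hasDerivAt_mdot_update (r x) (h z) (t (wIdx x z)) i (h z i)).const_mul (sSign x z)
    · simpa [hz] using
        hasDerivAt_const (h y i) (sSign x z * mdot (r x) (h z) (t (wIdx x z)))
  simpa using HasDerivAt.fun_sum hterm
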